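/- arXiv:2604.08914 — 2 statements merged into one kernel-verified Lean document; each statement's English description precedes it below -/
import Mathlib

section
/- Fix f : ℕ. Let V be a type of blocks with functions author : V → Fin (2*f+1), round : V → ℕ, and a relation P : V → V → Prop (P a b means block b references block a, i.e., a is a parent of b). Assume: (i) per-round uniqueness: any two blocks with the same author and the same round are equal; (ii) references point backwards: P a b implies round a < round b; (iii) quorum references: every block b with round b ≥ 1 admits a finset S of blocks with S.card ≥ f+1 such that every s ∈ S satisfies round s = round b − 1 and P s b. Suppose B : V, R : ℕ, and there is a finset W of blocks with W.card ≥ f+1 such that every w ∈ W satisfies round w = R and P B w (i.e., f+1 blocks from distinct replicas at round R vote for B). Then every block b with round b > R satisfies Relation.TransGen P B b (b has a path to B). -/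
/-- Lemma 1 (path-exists): if f+1 blocks of round R vote for (directly
reference) a block B, then every block of a round greater than R has a path
(chain of reference steps) to B. -/
theorem path_exists (f : ℕ) (V : Type*)
    (author : V → Fin (2*f+1)) (round : V → ℕ) (P : V → V → Prop)
    (huniq : ∀ a b : V, author a = author b → round a = round b → a = b)
    (hback : ∀ a b : V, P a b → round a < round b)
    (hquorum : ∀ b : V, 1 ≤ round b →
      ∃ S : Finset V, f + 1 ≤ S.card ∧ ∀ s ∈ S, round s = round b - 1 ∧ P s b)
    (B : V) (R : ℕ) (W : Finset V) (hWcard : f + 1 ≤ W.card)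
    (hW : ∀ w ∈ W, round w = R ∧ P B w) :
    ∀ b : V, R < round b → Relation.TransGen P B b := by
  classical
  have key : ∀ n : ℕ, ∀ b : V, round b = R + 1 + n → Relation.TransGen P B b := by
    intro n
    induction n with
    | zero =>
      intro b hb
      obtain ⟨S, hS, hSp⟩ := hquorum b (by omega)
      have hround : ∀ x ∈ S ∪ W, round x = R := by
        intro x hx
        rcases Finset.mem_union.mp hx with h | h
        · have := (hSp x h).1
          omega
        · exact (hW x h).1
      have hcard : (S ∪ W).card ≤ 2 * f + 1 := by
        have h := Finset.card_le_card_of_injOn (s := S ∪ W)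
          (t := (Finset.univ : Finset (Fin (2 * f + 1)))) author
          (fun _ _ => Finset.mem_coe.mpr (Finset.mem_univ _))
          (fun x hx y hy hxy => huniq x y hxy
            ((hround x (Finset.mem_coe.mp hx)).trans (hround y (Finset.mem_coe.mp hy)).symm))
        simpa using h
      have hui := Finset.card_union_add_card_inter S W
      have hpos : 0 < (S ∩ W).card := by omega
      obtain ⟨x, hx⟩ := Finset.card_pos.mp hpos
      obtain ⟨hxS, hxW⟩ := Finset.mem_inter.mp hx
      exact Relation.TransGen.tail (Relation.TransGen.single (hW x hxW).2) (hSp x hxS).2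
    | succ n ih =>
      intro b hb
      obtain ⟨S, hS, hSp⟩ := hquorum b (by omega)
      obtain ⟨x, hx⟩ := Finset.card_pos.mp (show 0 < S.card by omega)
      have h := hSp x hx
      exact Relation.TransGen.tail (ih x (by omega)) h.2
  intro b hb
  exact key (round b - (R + 1)) b (by omega)
end

section
/- Fix f : ℕ. Let V be a type of blocks with functions author : V → Fin (2*f+1), round : V → ℕ, and a relation P : V → V → Prop (P a b means block b references block a). Assume: (i) per-round uniqueness: any two blocks with the same author and the same round are equal; (ii) references point backwards: P a b implies round a < round b; (iii) quorum references: every block b with round b ≥ 1 admits a finset S of blocks with S.card ≥ f+1 such that every s ∈ S satisfies round s = round b − 1 and P s b. Suppose a block B with round B = R is directly committed, i.e., there is a finset W of blocks with W.card ≥ f+1 such that every w ∈ W satisfies round w = R+1 and P B w. Then there is no block A with round A ≥ R+2 that lacks a path to B; that is, every block A with round A ≥ R+2 satisfies Relation.TransGen P B A. -/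
/-- Lemma 2 (commit-no-skip), abstract content: if a block B of round R is
directly committed (f+1 blocks of round R+1 reference it), then every block
of round ≥ R+2 (in particular, any anchor) has a path to B. -/
theorem directly_committed_never_skipped (f : ℕ) (V : Type*)
    (author : V → Fin (2*f+1)) (round : V → ℕ) (P : V → V → Prop)
    (huniq : ∀ a b : V, author a = author b → round a = round b → a = b)
    (hback : ∀ a b : V, P a b → round a < round b)
    (hquorum : ∀ b : V, 1 ≤ round b →
      ∃ S : Finset V, f + 1 ≤ S.card ∧ ∀ s ∈ S, round s = round b - 1 ∧ P s b)
    (B : V) (R : ℕ) (hB : round B = R)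
    (W : Finset V) (hWcard : f + 1 ≤ W.card)
    (hW : ∀ w ∈ W, round w = R + 1 ∧ P B w) :
    ∀ A : V, round A ≥ R + 2 → Relation.TransGen P B A := by
  classical
  have key : ∀ k : ℕ, ∀ A : V, round A = R + 2 + k → Relation.TransGen P B A := by
    intro k
    induction k with
    | zero =>
      intro A hA
      obtain ⟨S, hS, hSP⟩ := hquorum A (by omega)
      have hne : ¬ Disjoint S W := by
        intro hd
        have hinj : Set.InjOn author ((S ∪ W : Finset V) : Set V) := by
          have hr : ∀ x ∈ S ∪ W, round x = R + 1 := by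
            intro x hx
            rcases Finset.mem_union.1 hx with h | h
            · have := (hSP x h).1
              omega
            · exact (hW x h).1
          intro x hx y hy hxy
          exact huniq x y hxy
            ((hr x (Finset.mem_coe.1 hx)).trans (hr y (Finset.mem_coe.1 hy)).symm)
        have h1 := Finset.card_image_of_injOn hinj
        have h2 := Finset.card_le_univ ((S ∪ W).image author)
        rw [h1, Finset.card_union_of_disjoint hd, Fintype.card_fin] at h2
        omega
      obtain ⟨x, hxS, hxW⟩ := Finset.not_disjoint_iff.1 hne
      exact (Relation.TransGen.single (hW x hxW).2).tail (hSP x hxS).2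
    | succ k ih =>
      intro A hA
      obtain ⟨S, hS, hSP⟩ := hquorum A (by omega)
      obtain ⟨s, hs⟩ := Finset.card_pos.1 (show 0 < S.card by omega)
      have h := hSP s hs
      exact (ih s (by omega)).tail h.2
  intro A hA
  exact key (round A - (R + 2)) A (by omega)
end
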